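/- Let n ≥ 3 be an integer. For every ε > 0 there exists a constant C = C(n, ε) such that for all real H ≥ 2 and all monic polynomials f ∈ ℚ[X] of degree n, the number of n×n matrices with all entries in F(H) whose characteristic polynomial equals f is at most C·H^{n²+ε}. -/

import Mathlib

/-- The set of rationals `a/b` in lowest terms with `|a| ≤ H` and `1 ≤ b ≤ H`. -/
def Farey (H : ℝ) : Set ℚ := {x : ℚ | |(x.num : ℝ)| ≤ H ∧ (x.den : ℝ) ≤ H}

/-!
The characteristic polynomial of `A` determines `tr A` and, through
`det (X² - A²) = det (X - A) det (X + A)`, also `tr A²`. So the diagonal satisfies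
`∑ A i i = s` and, once it is fixed, the pairs off the diagonal satisfy
`∑_{i < j} A i j * A j i = c`. Up to factors `H ^ ε`, each equation has only as many solutions as
there are choices of the numerators: `H` for a diagonal entry and `H²` for a pair, in total
`H ^ (n + n (n - 1)) = H ^ n²`.

Both equations have the form `a₀ / d₀ + ⋯ + aₘ / dₘ = c`, and we count their solutions modulo
`(1 / L) ℤ`, starting from `L = 1`. Given `d₀ = D` and the other fractions, `a₀` is fixed modulo
`D / gcd(D, L)`, and the other fractions solve the same problem modulo `(1 / lcm(L, D)) ℤ`. Since
`∑_{D ≤ K} gcd(D, L) / D ≤ τ(L) (1 + log K)`, peeling off the fractions one by one loses only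
divisor functions and logarithms.
-/

section

open Finset

/-! ### The divisor bound -/

theorem natCast_add_one_le_mul_pow {x : ℝ} (hx : 1 < x) (e : ℕ) :
    (e : ℝ) + 1 ≤ x / (x - 1) * x ^ e := by
  have hx' : 0 < x - 1 := sub_pos.2 hx
  have bernoulli : 1 + e * (x - 1) ≤ x ^ e := by
    simpa using one_add_mul_le_pow (show (-2 : ℝ) ≤ x - 1 by linarith) e
  calc (e : ℝ) + 1 ≤ x / (x - 1) + e * x := by
        have : 1 ≤ x / (x - 1) := (one_le_div hx').2 (by linarith)
        nlinarith [e.cast_nonneg (α := ℝ)]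
    _ = x / (x - 1) * (1 + e * (x - 1)) := by field_simp
    _ ≤ x / (x - 1) * x ^ e := by gcongr

theorem natCast_add_one_le_pow {x : ℝ} (hx : 2 ≤ x) (e : ℕ) : (e : ℝ) + 1 ≤ x ^ e :=
  calc (e : ℝ) + 1 ≤ (2 : ℝ) ^ e := by exact_mod_cast Nat.lt_two_pow_self (n := e)
    _ ≤ x ^ e := by gcongr

theorem rpow_eq_prod_primeFactors {n : ℕ} (hn : n ≠ 0) (δ : ℝ) :
    (n : ℝ) ^ δ = ∏ p ∈ n.primeFactors, ((p : ℝ) ^ δ) ^ n.factorization p := by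
  conv_lhs =>
    rw [← Nat.prod_factorization_pow_eq_self hn, Nat.prod_factorization_eq_prod_primeFactors]
  rw [Nat.cast_prod, ← Real.finsetProd_rpow _ _ fun p _ => by positivity]
  refine prod_congr rfl fun p _ => ?_
  rw [Nat.cast_pow, Real.rpow_pow_comm p.cast_nonneg]

theorem exists_card_divisors_le_rpow {δ : ℝ} (hδ : 0 < δ) :
    ∃ C : ℝ, 0 ≤ C ∧ ∀ n : ℕ, (#n.divisors : ℝ) ≤ C * (n : ℝ) ^ δ := by
  set x : ℝ := 2 ^ δ
  have hx1 : 1 < x := Real.one_lt_rpow one_lt_two hδ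
  set c : ℝ := x / (x - 1)
  have hc1 : 1 ≤ c := (one_le_div (sub_pos.2 hx1)).2 (by linarith)
  set B : ℕ := ⌈(2 : ℝ) ^ δ⁻¹⌉₊
  refine ⟨c ^ B, by positivity, fun n => ?_⟩
  rcases eq_or_ne n 0 with rfl | hn
  · simp [Real.zero_rpow hδ.ne']
  -- For `p ≥ B` we have `p ^ δ ≥ 2`, so only the fewer than `B` smaller primes cost a factor `c`.
  have factor_le : ∀ p ∈ n.primeFactors, (n.factorization p : ℝ) + 1 ≤
      (if p < B then c else 1) * ((p : ℝ) ^ δ) ^ n.factorization p := by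
    intro p hp
    split_ifs with h
    · have hp2 : (2 : ℝ) ≤ p := mod_cast (Nat.prime_of_mem_primeFactors hp).two_le
      have hxp : x ≤ (p : ℝ) ^ δ := Real.rpow_le_rpow zero_le_two hp2 hδ.le
      exact (natCast_add_one_le_mul_pow hx1 _).trans (by gcongr)
    · rw [one_mul]
      refine natCast_add_one_le_pow ?_ _
      exact (Real.rpow_inv_le_iff_of_pos zero_le_two p.cast_nonneg hδ).1
        (Nat.ceil_le.1 (not_lt.1 h))
  have prod_le : ∏ p ∈ n.primeFactors, (if p < B then c else 1) ≤ c ^ B := by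
    rw [← prod_filter, prod_const]
    refine pow_le_pow_right₀ hc1 ?_
    calc #{p ∈ n.primeFactors | p < B} ≤ #(range B) := card_le_card fun p => by simp
      _ = B := card_range B
  calc (#n.divisors : ℝ) = ∏ p ∈ n.primeFactors, ((n.factorization p : ℝ) + 1) := by
        rw [Nat.card_divisors hn]; push_cast; rfl
    _ ≤ ∏ p ∈ n.primeFactors, (if p < B then c else 1) * ((p : ℝ) ^ δ) ^ n.factorization p :=
        prod_le_prod (fun _ _ => by positivity) factor_le
    _ = (∏ p ∈ n.primeFactors, if p < B then c else 1) * (n : ℝ) ^ δ := by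
        rw [prod_mul_distrib, rpow_eq_prod_primeFactors hn]
    _ ≤ c ^ B * (n : ℝ) ^ δ := by gcongr

theorem rpow_div_add_one_pow_le {x ε : ℝ} (hx : 1 ≤ x) (hε : 0 ≤ ε) (m : ℕ) :
    (x ^ (ε / (m + 1))) ^ m ≤ x ^ ε := by
  rw [← Real.rpow_mul_natCast (zero_le_one.trans hx)]
  refine Real.rpow_le_rpow_of_exponent_le hx ?_
  rw [div_mul_eq_mul_div, div_le_iff₀ (by positivity)]
  linarith

theorem exists_card_divisors_le_of_le_pow (m : ℕ) {ε : ℝ} (hε : 0 < ε) :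
    ∃ C : ℝ, 0 ≤ C ∧ ∀ N : ℕ, 1 ≤ N → ∀ n ≤ N ^ m, (#n.divisors : ℝ) ≤ C * (N : ℝ) ^ ε := by
  obtain ⟨C, hC0, hC⟩ := exists_card_divisors_le_rpow (δ := ε / (m + 1)) (by positivity)
  refine ⟨C, hC0, fun N hN n hn => (hC n).trans ?_⟩
  gcongr
  calc (n : ℝ) ^ (ε / (m + 1)) ≤ ((N : ℝ) ^ m) ^ (ε / (m + 1)) := by
        gcongr; exact_mod_cast hn
    _ = ((N : ℝ) ^ (ε / (m + 1))) ^ m := (Real.rpow_pow_comm N.cast_nonneg _ _).symm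
    _ ≤ (N : ℝ) ^ ε := rpow_div_add_one_pow_le (mod_cast hN) hε.le m

theorem one_add_log_le_mul_rpow {x ε : ℝ} (hx : 1 ≤ x) (hε : 0 < ε) :
    1 + Real.log x ≤ (1 + 1 / ε) * x ^ ε := by
  have hlog := Real.log_le_rpow_div (zero_le_one.trans hx) hε
  have hone := Real.one_le_rpow hx hε.le
  calc 1 + Real.log x ≤ x ^ ε + x ^ ε / ε := by gcongr
    _ = (1 + 1 / ε) * x ^ ε := by ring

theorem exists_card_divisors_mul_log_le (m : ℕ) {ε : ℝ} (hε : 0 < ε) :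
    ∃ C : ℝ, 0 ≤ C ∧ ∀ K : ℕ, 1 ≤ K → ∀ L ≤ K ^ m,
      #L.divisors * (1 + Real.log K) ≤ C * (K : ℝ) ^ ε := by
  obtain ⟨C, hC0, hC⟩ := exists_card_divisors_le_of_le_pow m (half_pos hε)
  refine ⟨C * (1 + 1 / (ε / 2)), by positivity, fun K hK L hL => ?_⟩
  calc #L.divisors * (1 + Real.log K)
      ≤ C * (K : ℝ) ^ (ε / 2) * ((1 + 1 / (ε / 2)) * (K : ℝ) ^ (ε / 2)) := by
        gcongr
        · exact hC K hK L hL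
        · exact one_add_log_le_mul_rpow (mod_cast hK) (half_pos hε)
    _ = C * (1 + 1 / (ε / 2)) * ((K : ℝ) ^ (ε / 2) * (K : ℝ) ^ (ε / 2)) := by ring
    _ = C * (1 + 1 / (ε / 2)) * (K : ℝ) ^ ε := by
        rw [← Real.rpow_add (mod_cast hK), add_halves]

theorem sum_one_div_Icc_le (K : ℕ) : ∑ D ∈ Icc 1 K, (1 : ℝ) / D ≤ 1 + Real.log K := by
  simpa [harmonic_eq_sum_Icc] using harmonic_le_one_add_log K

theorem sum_div_multiples_le {g : ℕ} (hg : 0 < g) (K : ℕ) :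
    ∑ D ∈ Icc 1 K with g ∣ D, (g : ℝ) / D ≤ ∑ E ∈ Icc 1 K, (1 : ℝ) / E := by
  have multiples_subset : {D ∈ Icc 1 K | g ∣ D} ⊆ (Icc 1 K).image (g * ·) := by
    intro D hD
    obtain ⟨hD, E, rfl⟩ := mem_filter.1 hD
    rw [mem_Icc] at hD
    exact mem_image_of_mem _ (mem_Icc.2
      ⟨Nat.pos_of_mul_pos_left hD.1, (Nat.le_mul_of_pos_left E hg).trans hD.2⟩)
  calc ∑ D ∈ Icc 1 K with g ∣ D, (g : ℝ) / D ≤ ∑ D ∈ (Icc 1 K).image (g * ·), (g : ℝ) / D :=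
        sum_le_sum_of_subset_of_nonneg multiples_subset fun _ _ _ => by positivity
    _ = ∑ E ∈ Icc 1 K, (1 : ℝ) / E := by
        rw [sum_image (mul_right_injective₀ hg.ne').injOn]
        refine sum_congr rfl fun E _ => ?_
        rw [Nat.cast_mul, div_mul_cancel_left₀ (by positivity), one_div]

theorem sum_gcd_div_le (K : ℕ) {L : ℕ} (hL : L ≠ 0) :
    ∑ D ∈ Icc 1 K, (D.gcd L : ℝ) / D ≤ #L.divisors * (1 + Real.log K) :=
  calc ∑ D ∈ Icc 1 K, (D.gcd L : ℝ) / D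
      ≤ ∑ D ∈ Icc 1 K, ∑ g ∈ L.divisors, if g ∣ D then (g : ℝ) / D else 0 := by
        refine sum_le_sum fun D _ => ?_
        have hmem : D.gcd L ∈ L.divisors := Nat.mem_divisors.2 ⟨D.gcd_dvd_right L, hL⟩
        simpa [Nat.gcd_dvd_left] using single_le_sum
          (f := fun g : ℕ => if g ∣ D then (g : ℝ) / D else 0) (fun _ _ => by positivity) hmem
    _ = ∑ g ∈ L.divisors, ∑ D ∈ Icc 1 K with g ∣ D, (g : ℝ) / D := by
        rw [sum_comm]; simp only [sum_filter]
    _ ≤ ∑ _g ∈ L.divisors, (1 + Real.log K) := sum_le_sum fun _ hg =>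
        (sum_div_multiples_le (Nat.pos_of_mem_divisors hg) K).trans (sum_one_div_Icc_le K)
    _ = #L.divisors * (1 + Real.log K) := by rw [sum_const, nsmul_eq_mul]

theorem card_le_of_modEq {H d : ℕ} (hd : 0 < d) (hdH : d ≤ H) {r : ℤ} {S : Finset ℤ}
    (hS : ∀ a ∈ S, a.natAbs ≤ H) (hr : ∀ a ∈ S, a ≡ r [ZMOD d]) : (#S : ℝ) ≤ 4 * H / d := by
  have hsub : S ⊆ {x ∈ Ioc (-(H : ℤ) - 1) H | x ≡ r [ZMOD d]} := fun a ha => by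
    have := hS a ha
    exact mem_filter.2 ⟨mem_Ioc.2 (by omega), hr a ha⟩
  set u : ℚ := ((H : ℤ) - r) / d with hu
  set l : ℚ := ((-(H : ℤ) - 1 : ℤ) - r) / d with hl
  have hcard : (#S : ℤ) ≤ max (⌊u⌋ - ⌊l⌋) 0 := by
    rw [hu, hl, ← Int.cast_natCast (R := ℚ) d, ← Int.Ioc_filter_modEq_card _ _ (mod_cast hd)]
    exact mod_cast card_le_card hsub
  have hle : (#S : ℚ) ≤ 4 * H / d := by
    have hfloor : (⌊u⌋ : ℚ) - ⌊l⌋ ≤ 4 * H / d :=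
      calc (⌊u⌋ : ℚ) - ⌊l⌋ ≤ u - l + 1 := by linarith [Int.floor_le u, Int.lt_floor_add_one l]
        _ = (2 * H + 1 + d) / d := by rw [hu, hl]; push_cast; field_simp; ring
        _ ≤ 4 * H / d := by gcongr; exact_mod_cast (by omega : 2 * H + 1 + d ≤ 4 * H)
    calc (#S : ℚ) ≤ max ((⌊u⌋ : ℚ) - ⌊l⌋) 0 := mod_cast hcard
      _ ≤ 4 * H / d := max_le hfloor (by positivity)
  simpa using (Rat.cast_le (K := ℝ)).2 hle

/-! ### Sums of fractions modulo `(1 / L) ℤ` -/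

theorem card_le_mul_of_fiber_le {α β : Type*} [DecidableEq β] {s : Finset α} {t : Finset β}
    {f : α → β} {b : ℝ} (hf : ∀ a ∈ s, f a ∈ t) (hb : ∀ y ∈ t, (#{a ∈ s | f a = y} : ℝ) ≤ b) :
    (#s : ℝ) ≤ b * #t := by
  rw [card_eq_sum_card_fiberwise hf, Nat.cast_sum, mul_comm, ← nsmul_eq_mul]
  exact sum_le_card_nsmul _ _ _ hb

theorem modEq_one_div_of_dvd {a b : ℚ} {L M : ℕ} (hM : M ≠ 0) (hLM : L ∣ M)
    (h : a ≡ b [PMOD (1 / L : ℚ)]) : a ≡ b [PMOD (1 / M : ℚ)] := by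
  obtain ⟨k, rfl⟩ := hLM
  have hk : (k : ℚ) ≠ 0 := mod_cast right_ne_zero_of_mul hM
  refine AddCommGroup.ModEq.of_nsmul (n := k) ?_
  convert h using 1
  rw [nsmul_eq_mul, Nat.cast_mul]
  field_simp

theorem intCast_div_modEq_zero (a : ℤ) (D : ℕ) : (a / D : ℚ) ≡ 0 [PMOD (1 / D : ℚ)] :=
  AddCommGroup.modEq_zero_iff_eq_zsmul.2 ⟨a, by rw [zsmul_eq_mul, mul_one_div]⟩

theorem modEq_div_gcd_of_div_modEq {a b : ℤ} {D L : ℕ} (hD : D ≠ 0) (hL : L ≠ 0)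
    (h : (a / D : ℚ) ≡ b / D [PMOD (1 / L : ℚ)]) : a ≡ b [ZMOD (D / D.gcd L : ℕ)] := by
  have hD' : (D : ℚ) ≠ 0 := mod_cast hD
  have hL' : (L : ℚ) ≠ 0 := mod_cast hL
  obtain ⟨k, hk⟩ := AddCommGroup.modEq_iff_zsmul'.1 h
  have hmul : (L : ℤ) * a ≡ L * b [ZMOD D] := by
    refine Int.modEq_iff_dvd.2 ⟨k, ?_⟩
    rw [zsmul_eq_mul] at hk
    field_simp at hk
    exact_mod_cast (by linarith : (L : ℚ) * b - L * a = D * k)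
  simpa [Int.gcd_natCast_natCast] using
    Int.ModEq.cancel_left_div_gcd (mod_cast Nat.pos_of_ne_zero hD) hmul

/-- The fractions `num v / den v` for `v ∈ V` have denominators at most `K`, and for every
denominator `D` and every divisor `d` of `D` at most `T / d` of the numerators over `D` lie in any
given residue class modulo `d`. -/
structure IsEquidistributed {α : Type*} (V : Finset α) (num : α → ℤ) (den : α → ℕ) (K : ℕ)
    (T : ℝ) : Prop where
  den_mem : ∀ v ∈ V, den v ∈ Icc 1 K
  card_le : ∀ D ∈ Icc 1 K, ∀ d : ℕ, d ∣ D → ∀ r : ℤ,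
    (#{v ∈ V | den v = D ∧ num v ≡ r [ZMOD d]} : ℝ) ≤ T / d

/-- The `m`-tuples in `V` whose fractions `num v / den v` add up to `c` modulo `(1 / L) ℤ`;
for `L = 0` this means that they add up to `c` exactly. -/
noncomputable def congruentTuples {α : Type*} (V : Finset α) (num : α → ℤ) (den : α → ℕ) (m L : ℕ)
    (c : ℚ) : Finset (Fin m → α) :=
  open Classical in
  {p ∈ Fintype.piFinset fun _ => V |
    ∑ i, (num (p i) / den (p i) : ℚ) ≡ c [PMOD (1 / L : ℚ)]}

theorem IsEquidistributed.nonneg {α : Type*} {V : Finset α} {num : α → ℤ} {den : α → ℕ} {K : ℕ}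
    {T : ℝ} (hV : IsEquidistributed V num den K T) (hK : 0 < K) : 0 ≤ T :=
  (Nat.cast_nonneg _).trans
    (by simpa using hV.card_le 1 (mem_Icc.2 ⟨le_rfl, hK⟩) 1 dvd_rfl 0)

section CongruentTuples

variable {α : Type*} {V : Finset α} {num : α → ℤ} {den : α → ℕ} {K m L : ℕ} {T : ℝ} {c : ℚ}

theorem mem_congruentTuples {p : Fin m → α} : p ∈ congruentTuples V num den m L c ↔
    (∀ i, p i ∈ V) ∧ ∑ i, (num (p i) / den (p i) : ℚ) ≡ c [PMOD (1 / L : ℚ)] := by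
  simp [congruentTuples]

theorem tail_mem_congruentTuples {p : Fin (m + 1) → α} (hL : L ≠ 0) (hD : den (p 0) ≠ 0)
    (hp : p ∈ congruentTuples V num den (m + 1) L c) :
    Fin.tail p ∈ congruentTuples V num den m (L.lcm (den (p 0))) c := by
  obtain ⟨hV, hsum⟩ := mem_congruentTuples.1 hp
  refine mem_congruentTuples.2 ⟨fun i => hV i.succ, ?_⟩
  have hM : L.lcm (den (p 0)) ≠ 0 := Nat.lcm_ne_zero hL hD
  have head := modEq_one_div_of_dvd hM (Nat.dvd_lcm_right _ _)
    (intCast_div_modEq_zero (num (p 0)) (den (p 0)))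
  have total := modEq_one_div_of_dvd hM (Nat.dvd_lcm_left _ _) hsum
  rw [Fin.sum_univ_succ] at total
  exact AddCommGroup.ModEq.add_left_cancel head (by simpa [Fin.tail] using total)

theorem num_modEq_of_mem_congruentTuples {p p' : Fin (m + 1) → α} (hL : L ≠ 0)
    (hD : den (p 0) ≠ 0) (hp : p ∈ congruentTuples V num den (m + 1) L c)
    (hp' : p' ∈ congruentTuples V num den (m + 1) L c) (hden : den (p 0) = den (p' 0))
    (htail : Fin.tail p = Fin.tail p') :
    num (p 0) ≡ num (p' 0) [ZMOD (den (p 0) / (den (p 0)).gcd L : ℕ)] := by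
  refine modEq_div_gcd_of_div_modEq hD hL ?_
  have htail' : ∀ i : Fin m, p i.succ = p' i.succ := congrFun htail
  have hsum := (mem_congruentTuples.1 hp).2.trans (mem_congruentTuples.1 hp').2.symm
  simp only [Fin.sum_univ_succ, htail', ← hden] at hsum
  exact AddCommGroup.ModEq.add_right_cancel' _ hsum

theorem card_congruentTuples_fiber_le (hV : IsEquidistributed V num den K T) (hL : L ≠ 0) {D : ℕ}
    (hD : D ∈ Icc 1 K) (q : Fin m → α) [DecidableEq (Fin m → α)] :
    (#{p ∈ congruentTuples V num den (m + 1) L c | den (p 0) = D ∧ Fin.tail p = q} : ℝ) ≤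
      T * (D.gcd L / D) := by
  classical
  set S := {p ∈ congruentTuples V num den (m + 1) L c | den (p 0) = D ∧ Fin.tail p = q}
  have hD0 : 0 < D := (mem_Icc.1 hD).1
  have mem_S : ∀ p ∈ S, p ∈ congruentTuples V num den (m + 1) L c ∧ den (p 0) = D ∧
    Fin.tail p = q := fun p hp => mem_filter.1 hp
  obtain ⟨r, hr⟩ : ∃ r : ℤ, ∀ p ∈ S, num (p 0) ≡ r [ZMOD (D / D.gcd L : ℕ)] := by
    rcases S.eq_empty_or_nonempty with h | ⟨p₀, h₀⟩
    · exact ⟨0, by simp [h]⟩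
    · obtain ⟨hp₀, hden₀, htail₀⟩ := mem_S p₀ h₀
      refine ⟨num (p₀ 0), fun p hp => ?_⟩
      obtain ⟨hp', rfl, htail⟩ := mem_S p hp
      exact num_modEq_of_mem_congruentTuples hL hD0.ne' hp' hp₀ hden₀.symm
        (htail.trans htail₀.symm)
  have head_injOn : Set.InjOn (fun p : Fin (m + 1) → α => p 0) S := fun p hp p' hp' h => by
    rw [← Fin.cons_self_tail p, ← Fin.cons_self_tail p', (mem_S p hp).2.2, (mem_S p' hp').2.2]
    exact congrArg (Fin.cons (α := fun _ => α) · q) h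
  have head_maps : ∀ p ∈ S, p 0 ∈ {v ∈ V | den v = D ∧ num v ≡ r [ZMOD (D / D.gcd L : ℕ)]} :=
    fun p hp => mem_filter.2
      ⟨(mem_congruentTuples.1 (mem_S p hp).1).1 0, (mem_S p hp).2.1, hr p hp⟩
  calc (#S : ℝ) ≤ #{v ∈ V | den v = D ∧ num v ≡ r [ZMOD (D / D.gcd L : ℕ)]} :=
        mod_cast card_le_card_of_injOn _ head_maps head_injOn
    _ ≤ T / (D / D.gcd L : ℕ) := hV.card_le D hD _ (Nat.div_dvd_of_dvd (D.gcd_dvd_left L)) r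
    _ = T * (D.gcd L / D) := by
        rw [Nat.cast_div (D.gcd_dvd_left L) (by positivity [D.gcd_pos_of_pos_left L hD0]),
          div_div_eq_mul_div, mul_div_assoc]

theorem card_congruentTuples_succ_le (hV : IsEquidistributed V num den K T) (hK : 0 < K)
    (hL : L ≠ 0) {R : ℝ}
    (hR : ∀ D ∈ Icc 1 K, (#(congruentTuples V num den m (L.lcm D) c) : ℝ) ≤ R) :
    (#(congruentTuples V num den (m + 1) L c) : ℝ) ≤
      T * (#L.divisors * (1 + Real.log K)) * R := by
  classical
  have hT : 0 ≤ T := hV.nonneg hK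
  have hR₀ : 0 ≤ R := (Nat.cast_nonneg _).trans (hR 1 (mem_Icc.2 ⟨le_rfl, hK⟩))
  set S := congruentTuples V num den (m + 1) L c
  have den_head_mem : ∀ p ∈ S, den (p 0) ∈ Icc 1 K := fun p hp =>
    hV.den_mem _ ((mem_congruentTuples.1 hp).1 0)
  have card_fiber_le : ∀ D ∈ Icc 1 K, (#{p ∈ S | den (p 0) = D} : ℝ) ≤
      T * (D.gcd L / D) * R := by
    intro D hD
    have tail_mem : ∀ p ∈ {p ∈ S | den (p 0) = D},
        Fin.tail p ∈ congruentTuples V num den m (L.lcm D) c := by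
      intro p hp
      obtain ⟨hpS, rfl⟩ := mem_filter.1 hp
      exact tail_mem_congruentTuples hL (Nat.one_le_iff_ne_zero.1 (mem_Icc.1 hD).1) hpS
    calc (#{p ∈ S | den (p 0) = D} : ℝ)
        ≤ T * (D.gcd L / D) * #(congruentTuples V num den m (L.lcm D) c) :=
          card_le_mul_of_fiber_le tail_mem fun q _ => by
            rw [filter_filter]; exact card_congruentTuples_fiber_le hV hL hD q
      _ ≤ T * (D.gcd L / D) * R := by gcongr; exact hR D hD
  calc (#S : ℝ) = ∑ D ∈ Icc 1 K, (#{p ∈ S | den (p 0) = D} : ℝ) := by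
        rw [card_eq_sum_card_fiberwise den_head_mem, Nat.cast_sum]
    _ ≤ ∑ D ∈ Icc 1 K, T * (D.gcd L / D) * R := sum_le_sum card_fiber_le
    _ = T * (∑ D ∈ Icc 1 K, (D.gcd L : ℝ) / D) * R := by rw [mul_sum, sum_mul]
    _ ≤ T * (#L.divisors * (1 + Real.log K)) * R := by
        gcongr
        exact sum_gcd_div_le K hL

theorem card_congruentTuples_le (hV : IsEquidistributed V num den K T) (hK : 0 < K) {X : ℕ} {B : ℝ}
    (hB : ∀ L ≤ X, #L.divisors * (1 + Real.log K) ≤ B)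
    (hL : L ≠ 0) (hX : L * K ^ m ≤ X) :
    (#(congruentTuples V num den m L c) : ℝ) ≤ (T * B) ^ m := by
  induction m generalizing L with
  | zero =>
    rw [pow_zero]
    exact_mod_cast card_le_one_of_subsingleton _
  | succ m ih =>
    have tuples_lcm_le : ∀ D ∈ Icc 1 K,
        (#(congruentTuples V num den m (L.lcm D) c) : ℝ) ≤ (T * B) ^ m := by
      intro D hD
      obtain ⟨hD1, hDK⟩ := mem_Icc.1 hD
      refine ih (Nat.lcm_ne_zero hL (Nat.one_le_iff_ne_zero.1 hD1)) (le_trans ?_ hX)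
      calc L.lcm D * K ^ m ≤ L * K * K ^ m := by
            gcongr; exact (Nat.lcm_le_mul (by positivity) hD1).trans (by gcongr)
        _ = L * K ^ (m + 1) := by ring
    have hT : 0 ≤ T := hV.nonneg hK
    have hLX : L ≤ X := (Nat.le_mul_of_pos_right L (by positivity)).trans hX
    have hB₀ : 0 ≤ B := le_trans (by positivity) (hB L hLX)
    calc (#(congruentTuples V num den (m + 1) L c) : ℝ)
        ≤ T * (#L.divisors * (1 + Real.log K)) * (T * B) ^ m :=
          card_congruentTuples_succ_le hV hK hL tuples_lcm_le
      _ ≤ T * B * (T * B) ^ m := by gcongr; exact hB L hLX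
      _ = (T * B) ^ (m + 1) := (pow_succ' _ _).symm

end CongruentTuples

theorem card_sum_div_eq_le_card_congruentTuples {ι α : Type*} [Fintype ι] [DecidableEq ι]
    (V : Finset α) (num : α → ℤ) (den : α → ℕ) (L : ℕ) (c : ℚ) :
    #{p ∈ Fintype.piFinset fun _ : ι => V | ∑ i, (num (p i) / den (p i) : ℚ) = c} ≤
      #(congruentTuples V num den (Fintype.card ι) L c) := by
  set e := (Fintype.equivFin ι).symm
  refine card_le_card_of_injOn (fun p => p ∘ e) (fun p hp => ?_)
    (e.surjective.injective_comp_right.injOn)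
  obtain ⟨hpV, hsum⟩ := mem_filter.1 hp
  refine mem_congruentTuples.2 ⟨fun i => Fintype.mem_piFinset.1 hpV (e i), ?_⟩
  simp only [Function.comp_apply, e.sum_comp fun i => (num (p i) / den (p i) : ℚ), hsum]
  exact AddCommGroup.modEq_rfl

theorem exists_card_sum_div_eq_le (ι : Type*) [Fintype ι] [DecidableEq ι] {ε : ℝ} (hε : 0 < ε) :
    ∃ C : ℝ, 0 ≤ C ∧ ∀ {α : Type*} {V : Finset α} {num : α → ℤ} {den : α → ℕ} {K : ℕ} {T : ℝ},
      0 < K → IsEquidistributed V num den K T → ∀ c : ℚ,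
        (#{p ∈ Fintype.piFinset fun _ : ι => V | ∑ i, (num (p i) / den (p i) : ℚ) = c} : ℝ) ≤
          C * T ^ Fintype.card ι * (K : ℝ) ^ ε := by
  set m := Fintype.card ι
  obtain ⟨B, hB0, hB⟩ := exists_card_divisors_mul_log_le m (ε := ε / (m + 1)) (by positivity)
  refine ⟨B ^ m, by positivity, fun {α V num den K T} hK hV c => ?_⟩
  have hT : 0 ≤ T := hV.nonneg hK
  calc (#{p ∈ Fintype.piFinset fun _ : ι => V | ∑ i, (num (p i) / den (p i) : ℚ) = c} : ℝ)
      ≤ #(congruentTuples V num den m 1 c) :=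
        Nat.cast_le.2 (card_sum_div_eq_le_card_congruentTuples V num den 1 c)
    _ ≤ (T * (B * (K : ℝ) ^ (ε / (m + 1)))) ^ m :=
        card_congruentTuples_le hV hK (hB K hK) one_ne_zero (one_mul _).le
    _ = B ^ m * T ^ m * ((K : ℝ) ^ (ε / (m + 1))) ^ m := by ring
    _ ≤ B ^ m * T ^ m * (K : ℝ) ^ ε := by
        gcongr
        exact rpow_div_add_one_pow_le (mod_cast hK) hε.le m

/-! ### Farey fractions and their products -/

theorem rat_num_den_injective : Function.Injective fun x : ℚ => (x.num, x.den) := fun _ _ h =>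
  Rat.ext (Prod.ext_iff.1 h).1 (Prod.ext_iff.1 h).2

/-- The set `Farey N` as a finset, for a natural number `N`. -/
noncomputable def fareyFinset (N : ℕ) : Finset ℚ :=
  (Icc (-N : ℤ) N ×ˢ Icc 1 N).preimage (fun x => (x.num, x.den)) rat_num_den_injective.injOn

theorem mem_fareyFinset {N : ℕ} {x : ℚ} : x ∈ fareyFinset N ↔ x.num.natAbs ≤ N ∧ x.den ≤ N := by
  have := x.den_pos
  simp only [fareyFinset, mem_preimage, mem_product, mem_Icc]
  omega

theorem mem_farey_iff_mem_fareyFinset {H : ℝ} (hH : 0 ≤ H) {x : ℚ} :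
    x ∈ Farey H ↔ x ∈ fareyFinset ⌊H⌋₊ := by
  rw [mem_fareyFinset, Nat.le_floor_iff hH, Nat.le_floor_iff hH, Nat.cast_natAbs, Int.cast_abs]
  rfl

theorem den_mem_Icc_of_mem_fareyFinset {N : ℕ} {x : ℚ} (hx : x ∈ fareyFinset N) :
    x.den ∈ Icc 1 N :=
  mem_Icc.2 ⟨x.den_pos, (mem_fareyFinset.1 hx).2⟩

theorem isEquidistributed_fareyFinset (N : ℕ) :
    IsEquidistributed (fareyFinset N) Rat.num Rat.den N (4 * N) where
  den_mem _ := den_mem_Icc_of_mem_fareyFinset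
  card_le D hD d hd r := by
    obtain ⟨hD1, hDN⟩ := mem_Icc.1 hD
    set S := {x ∈ fareyFinset N | x.den = D ∧ x.num ≡ r [ZMOD d]}
    have mem_S : ∀ x ∈ S, x ∈ fareyFinset N ∧ x.den = D ∧ x.num ≡ r [ZMOD d] := fun x hx =>
      mem_filter.1 hx
    have num_injOn : Set.InjOn Rat.num (S : Set ℚ) := fun x hx y hy h =>
      Rat.ext h ((mem_S x hx).2.1.trans (mem_S y hy).2.1.symm)
    rw [← card_image_of_injOn num_injOn]
    refine card_le_of_modEq (Nat.pos_of_dvd_of_pos hd hD1) ((Nat.le_of_dvd hD1 hd).trans hDN)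
      (r := r) (forall_mem_image.2 fun x hx => ?_) (forall_mem_image.2 fun x hx => ?_)
    · exact (mem_fareyFinset.1 (mem_S x hx).1).1
    · exact (mem_S x hx).2.2

theorem card_fareyFinset_den_eq_le (N : ℕ) {D : ℕ} (hD : 0 < D) :
    (#{x ∈ fareyFinset N | x.den = D} : ℝ) ≤ 4 * N ^ 2 / D := by
  rcases le_or_gt D N with hDN | hND
  · have card_le : (#{x ∈ fareyFinset N | x.den = D} : ℝ) ≤ 4 * N := by
      simpa [Int.modEq_one] using (isEquidistributed_fareyFinset N).card_le D
        (mem_Icc.2 ⟨hD, hDN⟩) 1 (one_dvd D) 0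
    refine card_le.trans ((le_div_iff₀ (by positivity)).2 ?_)
    calc (4 * N * D : ℝ) ≤ 4 * N * N := by gcongr
      _ = 4 * N ^ 2 := by ring
  · rw [filter_false_of_mem fun x hx h => by have := (mem_fareyFinset.1 hx).2; omega]
    simp only [card_empty, Nat.cast_zero]
    positivity

theorem card_num_mul_num_eq_zero_le (N : ℕ) {D : ℕ} (hD : 0 < D) :
    (#{v ∈ fareyFinset N ×ˢ fareyFinset N |
      v.1.den * v.2.den = D ∧ v.1.num * v.2.num = 0} : ℝ) ≤ 8 * N ^ 2 / D := by
  set S := {x ∈ fareyFinset N | x.den = D}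
  have subset_union : {v ∈ fareyFinset N ×ˢ fareyFinset N |
      v.1.den * v.2.den = D ∧ v.1.num * v.2.num = 0} ⊆ S.image (0, ·) ∪ S.image (·, 0) := by
    -- `0` has denominator `1`, so the other factor has denominator `D`.
    rintro ⟨x, y⟩ hv
    simp only [mem_filter, mem_product, mul_eq_zero, Rat.num_eq_zero] at hv
    obtain ⟨⟨hx, hy⟩, hden, rfl | rfl⟩ := hv
    · exact mem_union_left _ (mem_image_of_mem _ (mem_filter.2 ⟨hy, by simpa using hden⟩))
    · exact mem_union_right _ (mem_image_of_mem (·, 0) (mem_filter.2 ⟨hx, by simpa using hden⟩))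
  calc (#{v ∈ fareyFinset N ×ˢ fareyFinset N |
        v.1.den * v.2.den = D ∧ v.1.num * v.2.num = 0} : ℝ) ≤ #S + #S := by
        exact_mod_cast (card_le_card subset_union).trans
          ((card_union_le _ _).trans (add_le_add card_image_le card_image_le))
    _ ≤ 4 * N ^ 2 / D + 4 * N ^ 2 / D :=
        add_le_add (card_fareyFinset_den_eq_le N hD) (card_fareyFinset_den_eq_le N hD)
    _ = 8 * N ^ 2 / D := by ring

theorem card_num_mul_num_eq_le (V : Finset (ℚ × ℚ)) {a : ℤ} (ha : a ≠ 0) (D : ℕ) :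
    #{v ∈ V | v.1.den * v.2.den = D ∧ v.1.num * v.2.num = a} ≤
      2 * #a.natAbs.divisors * #D.divisors := by
  calc #{v ∈ V | v.1.den * v.2.den = D ∧ v.1.num * v.2.num = a}
      ≤ #(a.divisors ×ˢ D.divisors) := by
        refine card_le_card_of_injOn (fun v => (v.1.num, v.1.den)) (fun v hv => ?_) ?_
        · obtain ⟨-, hden, hnum⟩ := mem_filter.1 hv
          exact mem_product.2 ⟨Int.mem_divisors.2 ⟨Dvd.intro _ hnum, ha⟩,
            Nat.mem_divisors.2 ⟨Dvd.intro _ hden, hden ▸ mul_ne_zero v.1.den_nz v.2.den_nz⟩⟩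
        · rintro ⟨x, y⟩ hv ⟨x', y'⟩ hv' h
          obtain ⟨-, hden, hnum⟩ := mem_filter.1 hv
          obtain ⟨-, hden', hnum'⟩ := mem_filter.1 hv'
          obtain rfl : x = x' := rat_num_den_injective h
          rw [← hnum'] at hnum ha
          rw [← hden'] at hden
          exact Prod.ext rfl (Rat.ext (mul_left_cancel₀ (left_ne_zero_of_mul ha) hnum)
            (mul_left_cancel₀ x.den_nz hden))
    _ = 2 * #a.natAbs.divisors * #D.divisors := by
        rw [card_product, Int.divisors, card_disjUnion, card_map, card_map, two_mul]

theorem exists_card_num_mul_num_eq_le {ε : ℝ} (hε : 0 < ε) :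
    ∃ C : ℝ, 0 ≤ C ∧ ∀ N : ℕ, 1 ≤ N → ∀ D ∈ Icc 1 (N ^ 2), ∀ a : ℤ, a ≠ 0 → a.natAbs ≤ N ^ 2 →
      ∀ V : Finset (ℚ × ℚ),
        (#{v ∈ V | v.1.den * v.2.den = D ∧ v.1.num * v.2.num = a} : ℝ) ≤ C * (N : ℝ) ^ ε := by
  obtain ⟨A, hA0, hA⟩ := exists_card_divisors_le_of_le_pow 2 (half_pos hε)
  refine ⟨2 * A ^ 2, by positivity, fun N hN D hD a ha haN V => ?_⟩
  have hDN : D ≤ N ^ 2 := (mem_Icc.1 hD).2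
  calc (#{v ∈ V | v.1.den * v.2.den = D ∧ v.1.num * v.2.num = a} : ℝ)
      ≤ 2 * #a.natAbs.divisors * #D.divisors :=
        mod_cast card_num_mul_num_eq_le V ha D
    _ ≤ 2 * (A * (N : ℝ) ^ (ε / 2)) * (A * (N : ℝ) ^ (ε / 2)) := by
        gcongr
        · exact hA N hN _ haN
        · exact hA N hN _ hDN
    _ = 2 * A ^ 2 * ((N : ℝ) ^ (ε / 2) * (N : ℝ) ^ (ε / 2)) := by ring
    _ = 2 * A ^ 2 * (N : ℝ) ^ ε := by rw [← Real.rpow_add (mod_cast hN), add_halves]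

theorem exists_card_num_mul_num_ne_zero_le {ε : ℝ} (hε : 0 < ε) :
    ∃ C : ℝ, 0 ≤ C ∧ ∀ N : ℕ, 1 ≤ N → ∀ D ∈ Icc 1 (N ^ 2), ∀ d : ℕ, d ∣ D → ∀ r : ℤ,
      (#{v ∈ fareyFinset N ×ˢ fareyFinset N | v.1.den * v.2.den = D ∧
        v.1.num * v.2.num ≡ r [ZMOD d] ∧ v.1.num * v.2.num ≠ 0} : ℝ) ≤
          C * (N : ℝ) ^ ε * (N ^ 2 / d) := by
  obtain ⟨C, hC0, hC⟩ := exists_card_num_mul_num_eq_le hε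
  refine ⟨4 * C, by positivity, fun N hN D hD d hd r => ?_⟩
  obtain ⟨hD1, hDN⟩ := mem_Icc.1 hD
  set S := {v ∈ fareyFinset N ×ˢ fareyFinset N | v.1.den * v.2.den = D ∧
    v.1.num * v.2.num ≡ r [ZMOD d] ∧ v.1.num * v.2.num ≠ 0}
  have mem_S : ∀ v ∈ S, (v.1.num * v.2.num).natAbs ≤ N ^ 2 ∧ v.1.den * v.2.den = D ∧
      v.1.num * v.2.num ≡ r [ZMOD d] ∧ v.1.num * v.2.num ≠ 0 := by
    intro v hv
    obtain ⟨hvF, hv⟩ := mem_filter.1 hv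
    obtain ⟨hx, hy⟩ := mem_product.1 hvF
    rw [Int.natAbs_mul, sq]
    exact ⟨Nat.mul_le_mul (mem_fareyFinset.1 hx).1 (mem_fareyFinset.1 hy).1, hv⟩
  have card_image_le : (#(S.image fun v => v.1.num * v.2.num) : ℝ) ≤ 4 * (N ^ 2 : ℕ) / d :=
    card_le_of_modEq (Nat.pos_of_dvd_of_pos hd hD1) ((Nat.le_of_dvd hD1 hd).trans hDN)
      (forall_mem_image.2 fun v hv => (mem_S v hv).1)
      (forall_mem_image.2 fun v hv => (mem_S v hv).2.2.1)
  have card_fiber_le : ∀ a ∈ S.image (fun v => v.1.num * v.2.num),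
      (#{v ∈ S | v.1.num * v.2.num = a} : ℝ) ≤ C * (N : ℝ) ^ ε := by
    refine forall_mem_image.2 fun v hv => ?_
    obtain ⟨haN, -, -, ha⟩ := mem_S v hv
    refine le_trans (Nat.cast_le.2 (card_le_card ?_)) (hC N hN D hD _ ha haN S)
    exact monotone_filter_right S fun w hw h => ⟨(mem_S w hw).2.1, h⟩
  calc (#S : ℝ) ≤ C * (N : ℝ) ^ ε * #(S.image fun v => v.1.num * v.2.num) :=
        card_le_mul_of_fiber_le (fun _ => mem_image_of_mem _) card_fiber_le
    _ ≤ C * (N : ℝ) ^ ε * (4 * (N ^ 2 : ℕ) / d) := by gcongr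
    _ = 4 * C * (N : ℝ) ^ ε * (N ^ 2 / d) := by push_cast; ring

theorem exists_isEquidistributed_fareyFinset_product {ε : ℝ} (hε : 0 < ε) :
    ∃ C : ℝ, 0 ≤ C ∧ ∀ N : ℕ, 1 ≤ N →
      IsEquidistributed (fareyFinset N ×ˢ fareyFinset N) (fun v => v.1.num * v.2.num)
        (fun v => v.1.den * v.2.den) (N ^ 2) (C * (N : ℝ) ^ ε * N ^ 2) := by
  obtain ⟨C, hC0, hC⟩ := exists_card_num_mul_num_ne_zero_le hε
  refine ⟨C + 8, by positivity, fun N hN => ⟨fun v hv => ?_, fun D hD d hd r => ?_⟩⟩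
  · obtain ⟨hx, hy⟩ := mem_product.1 hv
    rw [mem_Icc, sq]
    exact ⟨Nat.mul_pos v.1.den_pos v.2.den_pos,
      Nat.mul_le_mul (mem_fareyFinset.1 hx).2 (mem_fareyFinset.1 hy).2⟩
  have hD1 : 0 < D := (mem_Icc.1 hD).1
  have hd1 : 0 < d := Nat.pos_of_dvd_of_pos hd hD1
  set F := fareyFinset N ×ˢ fareyFinset N
  set S := {v ∈ F | v.1.den * v.2.den = D ∧ v.1.num * v.2.num ≡ r [ZMOD d]}
  have zero_le : (#{v ∈ S | v.1.num * v.2.num = 0} : ℝ) ≤ 8 * (N : ℝ) ^ ε * (N ^ 2 / d) := by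
    have subset_zero : {v ∈ S | v.1.num * v.2.num = 0} ⊆
        {v ∈ F | v.1.den * v.2.den = D ∧ v.1.num * v.2.num = 0} := fun v hv => by
      obtain ⟨hvS, hnum⟩ := mem_filter.1 hv
      exact mem_filter.2 ⟨(mem_filter.1 hvS).1, (mem_filter.1 hvS).2.1, hnum⟩
    calc (#{v ∈ S | v.1.num * v.2.num = 0} : ℝ) ≤ 8 * N ^ 2 / D :=
          (Nat.cast_le.2 (card_le_card subset_zero)).trans (card_num_mul_num_eq_zero_le N hD1)
      _ ≤ 8 * N ^ 2 / d := by gcongr; exact Nat.le_of_dvd hD1 hd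
      _ = 8 * 1 * (N ^ 2 / d) := by ring
      _ ≤ 8 * (N : ℝ) ^ ε * (N ^ 2 / d) := by
          gcongr; exact Real.one_le_rpow (mod_cast hN) hε.le
  have ne_zero_le : (#{v ∈ S | v.1.num * v.2.num ≠ 0} : ℝ) ≤ C * (N : ℝ) ^ ε * (N ^ 2 / d) := by
    simpa only [S, filter_filter, and_assoc] using hC N hN D hD d hd r
  calc (#S : ℝ) = #{v ∈ S | v.1.num * v.2.num = 0} + #{v ∈ S | v.1.num * v.2.num ≠ 0} := by
        exact_mod_cast (card_filter_add_card_filter_not _).symm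
    _ ≤ 8 * (N : ℝ) ^ ε * (N ^ 2 / d) + C * (N : ℝ) ^ ε * (N ^ 2 / d) :=
        add_le_add zero_le ne_zero_le
    _ = (C + 8) * (N : ℝ) ^ ε * N ^ 2 / d := by ring

theorem exists_card_sum_eq_le (ι : Type*) [Fintype ι] [DecidableEq ι] {ε : ℝ} (hε : 0 < ε) :
    ∃ C : ℝ, 0 ≤ C ∧ ∀ N : ℕ, 1 ≤ N → ∀ c : ℚ,
      (#{d ∈ Fintype.piFinset fun _ : ι => fareyFinset N | ∑ i, d i = c} : ℝ) ≤
        C * (N : ℝ) ^ ε * N ^ Fintype.card ι := by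
  obtain ⟨C, hC0, hC⟩ := exists_card_sum_div_eq_le ι hε
  refine ⟨C * 4 ^ Fintype.card ι, by positivity, fun N hN c => ?_⟩
  have card_le := hC hN (isEquidistributed_fareyFinset N) c
  simp only [Rat.num_div_den] at card_le
  exact card_le.trans_eq (by ring)

theorem exists_card_sum_mul_eq_le (ι : Type*) [Fintype ι] [DecidableEq ι] {ε : ℝ} (hε : 0 < ε) :
    ∃ C : ℝ, 0 ≤ C ∧ ∀ N : ℕ, 1 ≤ N → ∀ c : ℚ,
      (#{p ∈ Fintype.piFinset fun _ : ι => fareyFinset N ×ˢ fareyFinset N |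
        ∑ i, (p i).1 * (p i).2 = c} : ℝ) ≤ C * (N : ℝ) ^ ε * N ^ (2 * Fintype.card ι) := by
  set m := Fintype.card ι
  obtain ⟨A, hA0, hA⟩ := exists_isEquidistributed_fareyFinset_product (ε := ε / 2 / (m + 1))
    (by positivity)
  obtain ⟨C, hC0, hC⟩ := exists_card_sum_div_eq_le ι (ε := ε / 2 / 2) (by positivity)
  refine ⟨C * A ^ m, by positivity, fun N hN c => ?_⟩
  have div_eq_mul : ∀ v : ℚ × ℚ, ((v.1.num * v.2.num : ℤ) / (v.1.den * v.2.den : ℕ) : ℚ) =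
      v.1 * v.2 := fun v => by
    rw [Int.cast_mul, Nat.cast_mul, mul_div_mul_comm, Rat.num_div_den, Rat.num_div_den]
  have rpow_half : ((N ^ 2 : ℕ) : ℝ) ^ (ε / 2 / 2) = (N : ℝ) ^ (ε / 2) := by
    rw [Nat.cast_pow, ← Real.rpow_natCast_mul N.cast_nonneg]
    congr 1
    ring
  have card_le := hC (pow_pos hN 2) (hA N hN) c
  simp only [div_eq_mul, rpow_half] at card_le
  calc (#{p ∈ Fintype.piFinset fun _ : ι => fareyFinset N ×ˢ fareyFinset N |
        ∑ i, (p i).1 * (p i).2 = c} : ℝ)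
      ≤ C * (A * (N : ℝ) ^ (ε / 2 / (m + 1)) * N ^ 2) ^ m * (N : ℝ) ^ (ε / 2) := card_le
    _ = C * A ^ m * (((N : ℝ) ^ (ε / 2 / (m + 1))) ^ m * (N : ℝ) ^ (ε / 2)) * N ^ (2 * m) := by
        rw [pow_mul]; ring
    _ ≤ C * A ^ m * ((N : ℝ) ^ (ε / 2) * (N : ℝ) ^ (ε / 2)) * N ^ (2 * m) := by
        gcongr
        exact rpow_div_add_one_pow_le (mod_cast hN) (half_pos hε).le m
    _ = C * A ^ m * (N : ℝ) ^ ε * N ^ (2 * m) := by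
        rw [← Real.rpow_add (mod_cast hN), add_halves]

/-! ### Trace, trace of the square and the characteristic polynomial -/

section Charpoly

open Polynomial

variable {ι R : Type*} [Fintype ι] [DecidableEq ι] [CommRing R]

theorem charpoly_neg (M : Matrix ι ι R) :
    (-M).charpoly = (-1) ^ Fintype.card ι * M.charpoly.comp (-X) := by
  have map_charmatrix : (compRingHom (-X)).mapMatrix M.charmatrix = -(-M).charmatrix := by
    ext1 i j
    by_cases h : i = j
    · simp [h]; ring
    · simp [h]
  have comp_eq : M.charpoly.comp (-X) = (-(-M).charmatrix).det := by
    rw [← map_charmatrix, ← RingHom.map_det, coe_compRingHom_apply, Matrix.charpoly]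
  rw [comp_eq, Matrix.det_neg, ← mul_assoc, ← mul_pow, neg_one_mul, neg_neg, one_pow, one_mul,
    Matrix.charpoly]

theorem expand_charpoly_mul_self (M : Matrix ι ι R) :
    expand R 2 (M * M).charpoly = M.charpoly * (-M).charpoly := by
  have map_charmatrix : (expand R 2).toRingHom.mapMatrix (M * M).charmatrix =
      M.charmatrix * (-M).charmatrix := by
    have scalar_comm : Commute (Matrix.scalar ι (X : R[X])) (C.mapMatrix M) :=
      Matrix.scalar_commute _ (mul_comm _) _
    have map_scalar : (expand R 2).toRingHom.mapMatrix (Matrix.scalar ι (X : R[X])) =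
        Matrix.scalar ι X * Matrix.scalar ι X := by
      ext1 i j
      by_cases h : i = j <;> simp [h, sq]
    have map_C : (expand R 2).toRingHom.mapMatrix (C.mapMatrix (M * M)) =
        C.mapMatrix M * C.mapMatrix M := by
      rw [← map_mul]
      ext1 i j
      exact expand_C 2 _
    rw [Matrix.charmatrix, map_sub, map_scalar, map_C, Matrix.charmatrix, Matrix.charmatrix,
      map_neg, sub_neg_eq_add]
    exact scalar_comm.mul_self_sub_mul_self_eq'
  rw [Matrix.charpoly, Matrix.charpoly, Matrix.charpoly, ← Matrix.det_mul, ← map_charmatrix,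
    ← RingHom.map_det]
  rfl

theorem trace_mul_self_eq_of_charpoly_eq {A B : Matrix ι ι R} (h : A.charpoly = B.charpoly) :
    (A * A).trace = (B * B).trace := by
  have hsq : (A * A).charpoly = (B * B).charpoly := expand_injective two_pos <| by
    rw [expand_charpoly_mul_self, expand_charpoly_mul_self, charpoly_neg, charpoly_neg, h]
  rw [Matrix.trace_eq_neg_charpoly_nextCoeff, Matrix.trace_eq_neg_charpoly_nextCoeff, hsq]

theorem exists_trace_eq_of_charpoly_eq (f : R[X]) : ∃ s t : R, ∀ A : Matrix ι ι R,
    A.charpoly = f → A.trace = s ∧ (A * A).trace = t := by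
  by_cases hf : ∃ B : Matrix ι ι R, B.charpoly = f
  · obtain ⟨B, rfl⟩ := hf
    refine ⟨B.trace, (B * B).trace, fun A hA => ⟨?_, trace_mul_self_eq_of_charpoly_eq hA⟩⟩
    rw [Matrix.trace_eq_neg_charpoly_nextCoeff, Matrix.trace_eq_neg_charpoly_nextCoeff, hA]
  · exact ⟨0, 0, fun A hA => (hf ⟨A, hA⟩).elim⟩

end Charpoly

theorem sum_sum_eq_sum_diag_add_sum_lt {ι R : Type*} [Fintype ι] [LinearOrder ι] [AddCommMonoid R]
    {f : ι → ι → R} (hf : ∀ i j, f i j = f j i) :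
    ∑ i, ∑ j, f i j = ∑ i, f i i + 2 • ∑ p : {p : ι × ι // p.1 < p.2}, f p.1.1 p.1.2 := by
  have split_term : ∀ i j, f i j =
      ((if i = j then f i j else 0) + if i < j then f i j else 0) + if j < i then f j i else 0 := by
    intro i j
    rcases lt_trichotomy i j with h | rfl | h
    · simp [h, h.ne, h.not_gt]
    · simp
    · simp [h, h.ne', h.not_gt, hf i j]
  have sum_lt : ∑ i, ∑ j, (if i < j then f i j else 0) =
      ∑ p : {p : ι × ι // p.1 < p.2}, f p.1.1 p.1.2 := by
    rw [← Fintype.sum_prod_type' (f := fun i j => if i < j then f i j else 0), ← sum_filter]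
    exact sum_subtype _ (by simp) _
  calc ∑ i, ∑ j, f i j = ∑ i, f i i + ∑ i, ∑ j, (if i < j then f i j else 0) +
        ∑ i, ∑ j, (if j < i then f j i else 0) := by
        rw [sum_congr rfl fun i _ => sum_congr rfl fun j _ => split_term i j]
        simp only [sum_add_distrib, sum_ite_eq, mem_univ, if_true]
    _ = ∑ i, f i i + 2 • ∑ p : {p : ι × ι // p.1 < p.2}, f p.1.1 p.1.2 := by
        rw [sum_comm (f := fun i j => if j < i then f j i else 0), sum_lt, two_nsmul, add_assoc]

theorem trace_mul_self_eq {ι R : Type*} [Fintype ι] [LinearOrder ι] [CommSemiring R]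
    (A : Matrix ι ι R) : (A * A).trace =
      ∑ i, A i i * A i i + 2 * ∑ p : {p : ι × ι // p.1 < p.2}, A p.1.1 p.1.2 * A p.1.2 p.1.1 := by
  simpa [Matrix.trace, Matrix.mul_apply] using
    sum_sum_eq_sum_diag_add_sum_lt fun i j => mul_comm (A i j) (A j i)

theorem card_add_two_mul_card_lt (ι : Type*) [Fintype ι] [LinearOrder ι] :
    Fintype.card ι + 2 * Fintype.card {p : ι × ι // p.1 < p.2} = Fintype.card ι ^ 2 := by
  simpa [sq, -nsmul_eq_mul, smul_eq_mul] using
    (sum_sum_eq_sum_diag_add_sum_lt (ι := ι) (f := fun _ _ => (1 : ℕ)) fun _ _ => rfl).symm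

/-! ### Counting matrices -/

/-- The matrices with entries in `Farey N`, as a finset. -/
noncomputable def fareyMatrices (ι : Type*) [Fintype ι] [DecidableEq ι] (N : ℕ) :
    Finset (Matrix ι ι ℚ) :=
  Fintype.piFinset fun _ => Fintype.piFinset fun _ => fareyFinset N

theorem mem_fareyMatrices {ι : Type*} [Fintype ι] [DecidableEq ι] {N : ℕ} {A : Matrix ι ι ℚ} :
    A ∈ fareyMatrices ι N ↔ ∀ i j, A i j ∈ fareyFinset N :=
  Fintype.mem_piFinset.trans (forall_congr' fun _ => Fintype.mem_piFinset)

theorem finite_setOf_forall_mem_farey (ι : Type*) [Finite ι] {H : ℝ} (hH : 0 ≤ H) :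
    {A : Matrix ι ι ℚ | ∀ i j, A i j ∈ Farey H}.Finite := by
  classical
  have := Fintype.ofFinite ι
  exact (fareyMatrices ι ⌊H⌋₊).finite_toSet.subset fun A hA =>
    mem_fareyMatrices.2 fun i j => (mem_farey_iff_mem_fareyFinset hH).1 (hA i j)

theorem card_fareyMatrices_diag_eq_le {ι : Type*} [Fintype ι] [LinearOrder ι] (N : ℕ) (t : ℚ)
    (d : ι → ℚ) :
    #{A ∈ fareyMatrices ι N | A.diag = d ∧ (A * A).trace = t} ≤
      #{p ∈ Fintype.piFinset fun _ : {p : ι × ι // p.1 < p.2} => fareyFinset N ×ˢ fareyFinset N |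
        ∑ i, (p i).1 * (p i).2 = (t - ∑ i, d i * d i) / 2} := by
  refine card_le_card_of_injOn (fun A p => (A p.1.1 p.1.2, A p.1.2 p.1.1)) (fun A hA => ?_) ?_
  · obtain ⟨hAF, rfl, ht⟩ := mem_filter.1 hA
    have entry_mem := mem_fareyMatrices.1 hAF
    rw [trace_mul_self_eq] at ht
    refine mem_filter.2
      ⟨Fintype.mem_piFinset.2 fun p => mem_product.2 ⟨entry_mem _ _, entry_mem _ _⟩, ?_⟩
    simp only [Matrix.diag_apply]
    linarith
  · intro A hA B hB h
    have hdiag : A.diag = B.diag := (mem_filter.1 hA).2.1.trans (mem_filter.1 hB).2.1.symm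
    ext i j
    rcases lt_trichotomy i j with hij | rfl | hij
    · exact congrArg Prod.fst (congrFun h ⟨(i, j), hij⟩)
    · exact congrFun hdiag i
    · exact congrArg Prod.snd (congrFun h ⟨(j, i), hij⟩)

theorem exists_card_fareyMatrices_trace_eq_le (ι : Type*) [Fintype ι] [LinearOrder ι] {ε : ℝ}
    (hε : 0 < ε) : ∃ C : ℝ, 0 ≤ C ∧ ∀ N : ℕ, 1 ≤ N → ∀ s t : ℚ,
      (#{M ∈ fareyMatrices ι N | M.trace = s ∧ (M * M).trace = t} : ℝ) ≤
        C * (N : ℝ) ^ ((Fintype.card ι : ℝ) ^ 2 + ε) := by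
  set P := {p : ι × ι // p.1 < p.2}
  obtain ⟨A, hA0, hA⟩ := exists_card_sum_eq_le ι (half_pos hε)
  obtain ⟨B, hB0, hB⟩ := exists_card_sum_mul_eq_le P (half_pos hε)
  refine ⟨B * A, by positivity, fun N hN s t => ?_⟩
  have hN0 : (0 : ℝ) < N := mod_cast hN
  set S := {M ∈ fareyMatrices ι N | M.trace = s ∧ (M * M).trace = t}
  have diag_mem : ∀ M ∈ S, M.diag ∈ {d ∈ Fintype.piFinset fun _ : ι => fareyFinset N |
      ∑ i, d i = s} := fun M hM => by
    obtain ⟨hMF, hs, -⟩ := mem_filter.1 hM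
    exact mem_filter.2 ⟨Fintype.mem_piFinset.2 fun i => mem_fareyMatrices.1 hMF i i, hs⟩
  have fiber_subset : ∀ d : ι → ℚ, {M ∈ S | M.diag = d} ⊆
      {M ∈ fareyMatrices ι N | M.diag = d ∧ (M * M).trace = t} := fun d M hM => by
    obtain ⟨hMS, hd⟩ := mem_filter.1 hM
    obtain ⟨hMF, -, ht⟩ := mem_filter.1 hMS
    exact mem_filter.2 ⟨hMF, hd, ht⟩
  calc (#S : ℝ) ≤ B * (N : ℝ) ^ (ε / 2) * N ^ (2 * Fintype.card P) *
          #{d ∈ Fintype.piFinset fun _ : ι => fareyFinset N | ∑ i, d i = s} :=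
        card_le_mul_of_fiber_le diag_mem fun d _ => (Nat.cast_le.2 ((card_le_card
          (fiber_subset d)).trans (card_fareyMatrices_diag_eq_le N t d))).trans (hB N hN _)
    _ ≤ B * (N : ℝ) ^ (ε / 2) * N ^ (2 * Fintype.card P) *
          (A * (N : ℝ) ^ (ε / 2) * N ^ Fintype.card ι) := by gcongr; exact hA N hN s
    _ = B * A * ((N : ℝ) ^ (ε / 2) * (N : ℝ) ^ (ε / 2)) *
          N ^ (Fintype.card ι + 2 * Fintype.card P) := by rw [pow_add]; ring
    _ = B * A * (N : ℝ) ^ ((Fintype.card ι : ℝ) ^ 2 + ε) := by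
        rw [card_add_two_mul_card_lt, ← Real.rpow_natCast, ← Real.rpow_add hN0, add_halves,
          mul_assoc, ← Real.rpow_add hN0, Nat.cast_pow, add_comm]

theorem stmt7_general (ι : Type*) [Fintype ι] {ε : ℝ} (hε : 0 < ε) :
    ∃ C : ℝ, ∀ H : ℝ, 1 ≤ H → ∀ s t : ℚ,
      (Set.ncard {A : Matrix ι ι ℚ | (∀ i j, A i j ∈ Farey H) ∧ A.trace = s ∧ (A * A).trace = t} :
        ℝ) ≤ C * H ^ ((Fintype.card ι : ℝ) ^ 2 + ε) := by
  obtain ⟨_, -⟩ := exists_wellFoundedLT ι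
  obtain ⟨C, hC0, hC⟩ := exists_card_fareyMatrices_trace_eq_le ι hε
  refine ⟨C, fun H hH s t => ?_⟩
  have hH0 : 0 ≤ H := zero_le_one.trans hH
  have eq_coe_finset : {A : Matrix ι ι ℚ | (∀ i j, A i j ∈ Farey H) ∧ A.trace = s ∧
      (A * A).trace = t} = {A ∈ fareyMatrices ι ⌊H⌋₊ | A.trace = s ∧ (A * A).trace = t} := by
    ext A
    simp [mem_farey_iff_mem_fareyFinset hH0, mem_fareyMatrices]
  rw [eq_coe_finset, Set.ncard_coe_finset]
  refine (hC _ ((Nat.one_le_floor_iff _).2 hH) s t).trans ?_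
  gcongr
  exact Nat.floor_le hH0

theorem exists_ncard_charpoly_eq_le (ι : Type*) [Fintype ι] [DecidableEq ι] {ε : ℝ} (hε : 0 < ε) :
    ∃ C : ℝ, ∀ H : ℝ, 1 ≤ H → ∀ f : Polynomial ℚ,
      (Set.ncard {A : Matrix ι ι ℚ | (∀ i j, A i j ∈ Farey H) ∧ A.charpoly = f} : ℝ) ≤
        C * H ^ ((Fintype.card ι : ℝ) ^ 2 + ε) := by
  obtain ⟨C, hC⟩ := stmt7_general ι hε
  refine ⟨C, fun H hH f => ?_⟩
  obtain ⟨s, t, htrace⟩ := exists_trace_eq_of_charpoly_eq (ι := ι) f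
  refine le_trans (Nat.cast_le.2 (Set.ncard_le_ncard ?_ ?_)) (hC H hH s t)
  · exact fun A hA => ⟨hA.1, htrace A hA.2⟩
  · exact (finite_setOf_forall_mem_farey ι (zero_le_one.trans hH)).subset fun _ hA => hA.1

end

theorem stmt7 (n : ℕ) (hn : n ≥ 3) :
    ∀ ε > (0 : ℝ), ∃ C : ℝ, ∀ H : ℝ, H ≥ 2 →
      ∀ f : Polynomial ℚ, f.Monic → f.natDegree = n →
      (Set.ncard {A : Matrix (Fin n) (Fin n) ℚ |
          (∀ i j, A i j ∈ Farey H) ∧ A.charpoly = f} : ℝ) ≤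
        C * H ^ ((n ^ 2 : ℝ) + ε) := by
  intro ε hε
  obtain ⟨C, hC⟩ := exists_ncard_charpoly_eq_le (Fin n) hε
  exact ⟨C, fun H hH f _ _ => by simpa using hC H (one_le_two.trans hH) f⟩
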